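/- (Proposition 2) Let γ ∈ ℝ^N satisfy 0 < γ_1 < γ_2 < … < γ_N, and define the γ-weight of e ∈ F_2^N as γ(e) = Σ_{i=1}^N γ_i · e_{r_i}. Let e(1), e(2), …, e(2^N) be a bijective enumeration of F_2^N with γ(e(1)) ≤ γ(e(2)) ≤ … ≤ γ(e(2^N)). Then for every T_0 with 1 ≤ T_0 ≤ 2^N, the set E_0 = {e(1), …, e(T_0)} contains the root 0 and contains the parent (in the EP tree) of each of its nonzero elements; i.e., E_0 forms a subtree of the EP tree that includes the root. -/

import Mathlib

open scoped BigOperators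

/-- `j*(e)`: the (1-indexed) largest position `j` with `e_{r_j} = 1`; `j*(0) = 0`. -/
def jstar {N : ℕ} (r : Equiv.Perm (Fin N)) (e : Fin N → ZMod 2) : ℕ :=
  (Finset.univ.filter fun j : Fin N => e (r j) = 1).sup fun j => (j : ℕ) + 1

/-- The child relation of the EP tree on `F₂^N`: the root `0` has a single child
(the vector with a `1` in coordinate `r_1`); a nonzero `e` with `j*(e) < N` has a
left child (coordinate `r_{j*}` set to `0`, coordinate `r_{j*+1}` set to `1`) and a
right child (coordinate `r_{j*+1}` set to `1`); a node with `j*(e) = N` has no children. -/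
def Child {N : ℕ} (r : Equiv.Perm (Fin N)) (e c : Fin N → ZMod 2) : Prop :=
  (e = 0 ∧ ∃ h : 0 < N,
    c = Function.update (0 : Fin N → ZMod 2) (r ⟨0, h⟩) 1) ∨
  (e ≠ 0 ∧ ∃ h : jstar r e < N,
    c = Function.update
        (Function.update e (r ⟨jstar r e - 1, lt_of_le_of_lt (Nat.sub_le _ _) h⟩) 0)
        (r ⟨jstar r e, h⟩) 1 ∨
    c = Function.update e (r ⟨jstar r e, h⟩) 1)

/-- Soft weight of an error pattern: `ζ(e) = Σ_{i : e_i = 1} ℓ_i`. -/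
noncomputable def zeta {N : ℕ} (ℓ : Fin N → ℝ) (e : Fin N → ZMod 2) : ℝ :=
  ∑ i, if e i = 1 then ℓ i else 0

/-- The `γ`-weight of `e ∈ F₂^N`: `γ(e) = Σ_{i=1}^N γ_i · e_{r_i}`. -/
noncomputable def gammaWeight {N : ℕ} (r : Equiv.Perm (Fin N)) (γ : Fin N → ℝ)
    (e : Fin N → ZMod 2) : ℝ :=
  ∑ i : Fin N, if e (r i) = 1 then γ i else 0

/-!
Every edge of the EP tree strictly increases the `γ`-weight: passing to a right child adds
`γ_{j*+1} > 0`, and passing to a left child adds `γ_{j*+1} - γ_{j*} > 0`. Since `0` is the only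
vector of weight at most `0`, any nonempty set of vectors that is closed under passing to strictly
smaller weight contains the root and all parents of its elements. An initial segment of an
enumeration by nondecreasing weight is such a set.
-/

theorem mem_image_of_monotone_comp_of_lt {ι α β : Type*} [LinearOrder ι] [Preorder β]
    {w : α → β} {E : ι → α} (hE : Function.Surjective E) (hmono : Monotone (w ∘ E))
    {S : Set ι} (hS : IsLowerSet S) {x y : α} (hx : x ∈ E '' S) (hyx : w y < w x) :
    y ∈ E '' S := by
  obtain ⟨t, ht, rfl⟩ := hx
  obtain ⟨s, rfl⟩ := hE y
  have hst : s < t := hmono.reflect_lt hyx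
  exact ⟨s, hS hst.le ht, rfl⟩

section EPTree

variable {N : ℕ} {r : Equiv.Perm (Fin N)} {e : Fin N → ZMod 2}

theorem exists_apply_perm_eq_one (r : Equiv.Perm (Fin N)) (he : e ≠ 0) : ∃ k, e (r k) = 1 := by
  obtain ⟨i, hi⟩ := Function.ne_iff.mp he
  exact ⟨r.symm i, (congrArg e (r.apply_symm_apply i)).trans (Fin.eq_one_of_ne_zero _ hi)⟩

theorem lt_jstar_of_apply_eq_one {k : Fin N} (hk : e (r k) = 1) : (k : ℕ) < jstar r e :=
  Finset.le_sup (f := fun j : Fin N => (j : ℕ) + 1) (Finset.mem_filter_univ k |>.mpr hk)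

theorem apply_jstar_ne_one (h : jstar r e < N) : e (r ⟨jstar r e, h⟩) ≠ 1 :=
  fun hone => (lt_jstar_of_apply_eq_one hone).false

theorem exists_apply_eq_one_and_jstar_eq (he : e ≠ 0) :
    ∃ k : Fin N, e (r k) = 1 ∧ jstar r e = k + 1 := by
  obtain ⟨i, hi⟩ := exists_apply_perm_eq_one r he
  obtain ⟨k, hk, hsup⟩ := Finset.exists_mem_eq_sup (Finset.univ.filter fun j => e (r j) = 1)
    ⟨i, Finset.mem_filter_univ i |>.mpr hi⟩ fun j => (j : ℕ) + 1
  exact ⟨k, Finset.mem_filter_univ k |>.mp hk, hsup⟩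

theorem gammaWeight_update (γ : Fin N → ℝ) (k : Fin N) (b : ZMod 2) :
    gammaWeight r γ (Function.update e (r k) b) =
      gammaWeight r γ e + ((if b = 1 then γ k else 0) - if e (r k) = 1 then γ k else 0) := by
  rw [← sub_eq_iff_eq_add', gammaWeight, gammaWeight, ← Finset.sum_sub_distrib,
    Fintype.sum_eq_single k, Function.update_self]
  intro i hik
  rw [Function.update_of_ne (r.injective.ne hik), sub_self]

theorem gammaWeight_update_one (γ : Fin N → ℝ) {k : Fin N} (hk : e (r k) ≠ 1) :
    gammaWeight r γ (Function.update e (r k) 1) = gammaWeight r γ e + γ k := by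
  rw [gammaWeight_update, if_pos rfl, if_neg hk, sub_zero]

theorem gammaWeight_update_zero (γ : Fin N → ℝ) {k : Fin N} (hk : e (r k) = 1) :
    gammaWeight r γ (Function.update e (r k) 0) = gammaWeight r γ e - γ k := by
  rw [gammaWeight_update, if_neg zero_ne_one, if_pos hk, zero_sub, sub_eq_add_neg]

theorem gammaWeight_zero (r : Equiv.Perm (Fin N)) (γ : Fin N → ℝ) : gammaWeight r γ 0 = 0 := by
  simp [gammaWeight]

variable {γ : Fin N → ℝ}

theorem gammaWeight_pos (hpos : ∀ i, 0 < γ i) (he : e ≠ 0) : 0 < gammaWeight r γ e := by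
  obtain ⟨k, hk⟩ := exists_apply_perm_eq_one r he
  refine Finset.sum_pos' (fun i _ => ?_) ⟨k, Finset.mem_univ k, ?_⟩
  · exact ite_nonneg (hpos i).le le_rfl
  · rw [if_pos hk]
    exact hpos k

theorem gammaWeight_lt_update_one (hpos : ∀ i, 0 < γ i) {k : Fin N} (hk : e (r k) ≠ 1) :
    gammaWeight r γ e < gammaWeight r γ (Function.update e (r k) 1) := by
  rw [gammaWeight_update_one γ hk]
  exact lt_add_of_pos_right _ (hpos k)

theorem gammaWeight_lt_update_zero_update_one (hmono : StrictMono γ) {i k : Fin N} (hik : i < k)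
    (hi : e (r i) = 1) (hk : e (r k) ≠ 1) :
    gammaWeight r γ e <
      gammaWeight r γ (Function.update (Function.update e (r i) 0) (r k) 1) := by
  have hk' : Function.update e (r i) 0 (r k) ≠ 1 := by
    rwa [Function.update_of_ne (r.injective.ne hik.ne')]
  rw [gammaWeight_update_one γ hk', gammaWeight_update_zero γ hi]
  linarith [hmono hik]

theorem Child.gammaWeight_lt (hpos : ∀ i, 0 < γ i) (hmono : StrictMono γ)
    {p c : Fin N → ZMod 2} (h : Child r p c) : gammaWeight r γ p < gammaWeight r γ c := by
  rcases h with ⟨rfl, h, rfl⟩ | ⟨hp, h, rfl | rfl⟩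
  · exact gammaWeight_lt_update_one hpos zero_ne_one
  · obtain ⟨k, hk, hjstar⟩ := exists_apply_eq_one_and_jstar_eq (r := r) hp
    have hpred : (⟨jstar r p - 1, (Nat.sub_le _ _).trans_lt h⟩ : Fin N) = k :=
      Fin.ext (by simp only [hjstar, Nat.add_sub_cancel])
    rw [hpred]
    have hlt : k < ⟨jstar r p, h⟩ := lt_jstar_of_apply_eq_one hk
    exact gammaWeight_lt_update_zero_update_one hmono hlt hk (apply_jstar_ne_one h)
  · exact gammaWeight_lt_update_one hpos (apply_jstar_ne_one h)

theorem stmt15_general (hpos : ∀ i, 0 < γ i) (hmono : StrictMono γ)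
    {E₀ : Set (Fin N → ZMod 2)} (hne : E₀.Nonempty)
    (hlower : ∀ e ∈ E₀, ∀ x, gammaWeight r γ x < gammaWeight r γ e → x ∈ E₀) :
    (0 : Fin N → ZMod 2) ∈ E₀ ∧ ∀ e ∈ E₀, ∀ p : Fin N → ZMod 2, Child r p e → p ∈ E₀ := by
  refine ⟨?_, fun e he p hp => hlower e he p (hp.gammaWeight_lt hpos hmono)⟩
  obtain ⟨e, he⟩ := hne
  rcases eq_or_ne e 0 with rfl | he0
  · exact he
  · exact hlower e he 0 ((gammaWeight_zero r γ).trans_lt (gammaWeight_pos hpos he0))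

end EPTree

/-- Proposition 2: with `0 < γ_1 < γ_2 < … < γ_N`, if
`e(1), …, e(2^N)` bijectively enumerates `F₂^N` in nondecreasing `γ`-weight order,
then for every `1 ≤ T₀ ≤ 2^N` the set `E₀ = {e(1), …, e(T₀)}` contains the root `0`
and contains the parent of each of its nonzero elements, i.e. it forms a subtree of
the EP tree including the root. -/
theorem stmt15 {N : ℕ} (r : Equiv.Perm (Fin N)) (γ : Fin N → ℝ)
    (hpos : ∀ i, 0 < γ i) (hmono : StrictMono γ)
    (E : Fin (2 ^ N) → (Fin N → ZMod 2)) (hbij : Function.Bijective E)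
    (hord : ∀ s t : Fin (2 ^ N), s ≤ t → gammaWeight r γ (E s) ≤ gammaWeight r γ (E t))
    (T₀ : ℕ) (hT₀ : 1 ≤ T₀) (hT₀' : T₀ ≤ 2 ^ N)
    (E₀ : Set (Fin N → ZMod 2))
    (hE₀ : E₀ = {x | ∃ t : Fin (2 ^ N), (t : ℕ) < T₀ ∧ E t = x}) :
    (0 : Fin N → ZMod 2) ∈ E₀ ∧
    ∀ e ∈ E₀, e ≠ 0 → ∀ p : Fin N → ZMod 2, Child r p e → p ∈ E₀ := by
  have hnonempty : E₀.Nonempty := hE₀ ▸ ⟨_, ⟨0, Nat.two_pow_pos N⟩, hT₀, rfl⟩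
  have hweight : Monotone (gammaWeight r γ ∘ E) := hord
  have hinitial : IsLowerSet {t : Fin (2 ^ N) | (t : ℕ) < T₀} :=
    fun _ _ hst ht => (Fin.le_def.mp hst).trans_lt ht
  have hlower : ∀ e ∈ E₀, ∀ x, gammaWeight r γ x < gammaWeight r γ e → x ∈ E₀ :=
    hE₀ ▸ fun _ he _ => mem_image_of_monotone_comp_of_lt hbij.surjective hweight hinitial he
  exact (stmt15_general hpos hmono hnonempty hlower).imp_right fun hparent e he _ => hparent e he
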